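/- Let G = N(μ,Σ) be a d-dimensional Gaussian satisfying ‖Σ‖_F·√(log(nk/β)) ≤ (1/8)·tr(Σ) and ‖Σ‖₂·log²(nk/β) ≤ (1/8)·tr(Σ) for β < 1/2. Then the median radius R of G (the radius such that G assigns mass exactly 1/2 to the ball of radius R around μ) satisfies sqrt((3/4)·tr(Σ)) < R < sqrt((3/2)·tr(Σ)). -/

import Mathlib

open Real MeasureTheory Matrix

/-- The `d`-dimensional Gaussian measure `N(μ, S)`, given by its Lebesgue density. -/
noncomputable def mvGaussian (d : ℕ) (μ : Fin d → ℝ) (S : Matrix (Fin d) (Fin d) ℝ) :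
    Measure (Fin d → ℝ) :=
  volume.withDensity fun x => ENNReal.ofReal
    ((1 / Real.sqrt ((2 * π) ^ d * S.det)) *
      Real.exp (-(1 / 2) * ((fun i => x i - μ i) ⬝ᵥ (S⁻¹ *ᵥ fun i => x i - μ i))))

/-- Frobenius norm of a matrix. -/
noncomputable def frobNorm {d : ℕ} (S : Matrix (Fin d) (Fin d) ℝ) : ℝ :=
  Real.sqrt (∑ i, ∑ j, S i j ^ 2)

/-- Spectral norm of a symmetric PSD matrix, as the sup of `vᵀSv` over unit vectors. -/
noncomputable def specNorm {d : ℕ} (S : Matrix (Fin d) (Fin d) ℝ) : ℝ :=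
  sSup {t | ∃ v : Fin d → ℝ, ∑ i, v i ^ 2 = 1 ∧ t = v ⬝ᵥ (S *ᵥ v)}

/-! The squared distance `‖x - μ‖²` has mean `tr S` and variance `2 ‖S‖_F²`: in an eigenbasis of
`S` it is a sum of squares of independent centred Gaussians whose variances are the eigenvalues. A
median of a random variable is within one standard deviation of its mean, so
`|R² - tr S| ≤ √2 ‖S‖_F`. Since `log (nk/β) > 1/2`, the Frobenius flatness assumption makes the
right-hand side smaller than `tr S / 4`. -/

open ProbabilityTheory
open scoped NNReal ENNReal

section Median

variable {Ω : Type*} [MeasurableSpace Ω] {P : Measure Ω} [IsProbabilityMeasure P] {X : Ω → ℝ}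

lemma integral_abs_le_sqrt_integral_sq (hX : MemLp X 2 P) :
    ∫ ω, |X ω| ∂P ≤ √(∫ ω, X ω ^ 2 ∂P) := by
  have hvar : Var[fun ω => |X ω|; P] = ∫ ω, X ω ^ 2 ∂P - (∫ ω, |X ω| ∂P) ^ 2 := by
    simpa only [Pi.pow_apply, Real.norm_eq_abs, sq_abs] using variance_eq_sub hX.norm
  refine Real.le_sqrt_of_sq_le ?_
  linarith [variance_nonneg (fun ω => |X ω|) P]

/- If `c ≤ m`, then `m - X ≤ |X - c| + (m - c) (1 - 2 · 1_{m ≤ X})` pointwise, and the last term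
has nonpositive expectation; take `c = 𝔼 X`. -/
lemma le_integral_add_sqrt_variance (hX : MemLp X 2 P) {m : ℝ}
    (hm : 1 / 2 ≤ P.real {ω | m ≤ X ω}) : m ≤ P[X] + √Var[X; P] := by
  set c := P[X] with hc
  rcases le_total m c with hmc | hcm
  · exact hmc.trans (le_add_of_nonneg_right (Real.sqrt_nonneg _))
  have hXint : Integrable X P := hX.integrable one_le_two
  have hdev : MemLp (fun ω => X ω - c) 2 P := hX.sub (memLp_const c)
  have hset : NullMeasurableSet {ω | m ≤ X ω} P :=
    nullMeasurableSet_le aemeasurable_const hXint.aemeasurable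
  set s : Ω → ℝ := {ω | m ≤ X ω}.indicator 1 with hs
  have hsint : Integrable s P := (integrable_const 1).indicator₀ hset
  have hsval : ∫ ω, s ω ∂P = P.real {ω | m ≤ X ω} := by
    rw [hs, integral_indicator₀ hset]; simp
  have hpointwise (ω : Ω) : m - X ω ≤ |X ω - c| + (m - c) * (1 - 2 * s ω) := by
    by_cases hω : m ≤ X ω
    · have : s ω = 1 := by simp [hs, hω]
      rw [this]
      linarith [le_abs_self (X ω - c)]
    · have : s ω = 0 := by simp [hs, hω]
      rw [this]
      linarith [neg_abs_le (X ω - c)]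
  have hdev_le : ∫ ω, |X ω - c| ∂P ≤ √Var[X; P] := by
    rw [variance_eq_integral hXint.aemeasurable]
    exact integral_abs_le_sqrt_integral_sq hdev
  have hbound : m - c ≤ ∫ ω, |X ω - c| ∂P + (m - c) * (1 - 2 * P.real {ω | m ≤ X ω}) := by
    calc m - c = ∫ ω, (m - X ω) ∂P := by
          rw [integral_sub (integrable_const m) hXint]; simp [hc]
      _ ≤ ∫ ω, (|X ω - c| + (m - c) * (1 - 2 * s ω)) ∂P :=
          integral_mono (by fun_prop) (by have := hdev.integrable one_le_two; fun_prop) hpointwise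
      _ = _ := by
          rw [integral_add (hdev.integrable one_le_two).abs (by fun_prop), integral_const_mul,
            integral_sub (integrable_const 1) (by fun_prop), integral_const_mul, hsval]
          simp
  nlinarith

lemma abs_sub_integral_le_sqrt_variance (hX : MemLp X 2 P) {m : ℝ}
    (hle : 1 / 2 ≤ P.real {ω | X ω ≤ m}) (hge : 1 / 2 ≤ P.real {ω | m ≤ X ω}) :
    |m - P[X]| ≤ √Var[X; P] := by
  have hlower : -m ≤ P[-X] + √Var[-X; P] :=
    le_integral_add_sqrt_variance hX.neg (by simpa only [Pi.neg_apply, neg_le_neg_iff] using hle)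
  rw [variance_neg] at hlower
  simp only [Pi.neg_apply, integral_neg] at hlower
  rw [abs_sub_le_iff]
  constructor <;> linarith [le_integral_add_sqrt_variance hX hge]

end Median

section GaussianMoments

lemma hasDerivAt_gaussianPDFReal (μ : ℝ) (v : ℝ≥0) (x : ℝ) :
    HasDerivAt (gaussianPDFReal μ v) (-((x - μ) / v) * gaussianPDFReal μ v x) x := by
  have hexp : HasDerivAt (fun y => -(y - μ) ^ 2 / (2 * v)) (-((x - μ) / v)) x := by
    refine (((hasDerivAt_id x).sub_const μ).pow 2 |>.neg.div_const (2 * (v : ℝ))).congr_deriv ?_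
    simp only [id]
    ring
  exact (hexp.exp.const_mul _).congr_deriv (by rw [gaussianPDFReal]; ring)

lemma integrable_sub_pow_gaussianReal (μ : ℝ) (v : ℝ≥0) (n : ℕ) :
    Integrable (fun x => (x - μ) ^ n) (gaussianReal μ v) := by
  have h : MemLp (fun x => x - μ) n (gaussianReal μ v) :=
    (memLp_id_gaussianReal n).sub (memLp_const μ)
  refine h.integrable_norm_pow'.mono' (by fun_prop) (ae_of_all _ fun x => ?_)
  rw [norm_pow]

lemma integrable_sub_pow_mul_gaussianPDFReal (μ : ℝ) {v : ℝ≥0} (hv : v ≠ 0) (n : ℕ) :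
    Integrable fun x => (x - μ) ^ n * gaussianPDFReal μ v x := by
  have h := integrable_sub_pow_gaussianReal μ v n
  rw [gaussianReal_of_var_ne_zero μ hv, integrable_withDensity_iff_integrable_smul'
    (measurable_gaussianPDF μ v) (ae_of_all _ fun _ => gaussianPDF_lt_top)] at h
  simpa only [toReal_gaussianPDF, smul_eq_mul, mul_comm] using h

/- Stein's identity: integrate by parts, using that `-v` times the density is a primitive of
`x ↦ (x - μ)` times the density. -/
lemma integral_sub_pow_add_two_gaussianReal (μ : ℝ) (v : ℝ≥0) (n : ℕ) :
    ∫ x, (x - μ) ^ (n + 2) ∂gaussianReal μ v =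
      (n + 1) * v * ∫ x, (x - μ) ^ n ∂gaussianReal μ v := by
  rcases eq_or_ne v 0 with rfl | hv
  · simp
  have hv' : (v : ℝ) ≠ 0 := by exact_mod_cast hv
  have hint := integrable_sub_pow_mul_gaussianPDFReal μ hv
  have hpow (x : ℝ) :
      HasDerivAt (fun x => (x - μ) ^ (n + 1)) ((n + 1) * (x - μ) ^ n) x := by
    simpa using ((hasDerivAt_id x).sub_const μ).fun_pow (n + 1)
  have hpdf (x : ℝ) : HasDerivAt (fun x => -v * gaussianPDFReal μ v x)
      ((x - μ) * gaussianPDFReal μ v x) x :=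
    ((hasDerivAt_gaussianPDFReal μ v x).const_mul _).congr_deriv (by field_simp)
  have hparts := integral_mul_deriv_eq_deriv_mul_of_integrable
    (fun x _ => hpow x) (fun x _ => hpdf x)
    ((hint (n + 2)).congr (ae_of_all _ fun x => by simp only [Pi.mul_apply]; ring))
    (((hint n).const_mul (-((n + 1) * v))).congr
      (ae_of_all _ fun x => by simp only [Pi.mul_apply]; ring))
    (((hint (n + 1)).const_mul (-v)).congr (ae_of_all _ fun x => by simp only [Pi.mul_apply]; ring))
  simp only [integral_gaussianReal_eq_integral_smul hv, smul_eq_mul]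
  rw [← integral_const_mul]
  calc ∫ x, gaussianPDFReal μ v x * (x - μ) ^ (n + 2)
      = ∫ x, (x - μ) ^ (n + 1) * ((x - μ) * gaussianPDFReal μ v x) := by congr with x; ring
    _ = -∫ x, (n + 1) * (x - μ) ^ n * (-v * gaussianPDFReal μ v x) := hparts
    _ = _ := by rw [← integral_neg]; congr with x; ring

lemma integral_sub_sq_gaussianReal (μ : ℝ) (v : ℝ≥0) :
    ∫ x, (x - μ) ^ 2 ∂gaussianReal μ v = v := by
  simpa using integral_sub_pow_add_two_gaussianReal μ v 0

lemma memLp_sub_sq_gaussianReal (μ : ℝ) (v : ℝ≥0) :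
    MemLp (fun x => (x - μ) ^ 2) 2 (gaussianReal μ v) := by
  rw [memLp_two_iff_integrable_sq (by fun_prop)]
  simpa only [← pow_mul] using integrable_sub_pow_gaussianReal μ v (2 * 2)

lemma variance_sub_sq_gaussianReal (μ : ℝ) (v : ℝ≥0) :
    Var[fun x => (x - μ) ^ 2; gaussianReal μ v] = 2 * (v : ℝ) ^ 2 := by
  have hfour : ∫ x, ((x - μ) ^ 2) ^ 2 ∂gaussianReal μ v = 3 * (v : ℝ) ^ 2 := by
    simp_rw [← pow_mul]
    rw [integral_sub_pow_add_two_gaussianReal μ v 2, integral_sub_sq_gaussianReal]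
    push_cast
    ring
  rw [variance_eq_sub (memLp_sub_sq_gaussianReal μ v), integral_sub_sq_gaussianReal]
  simp only [Pi.pow_apply, hfour]
  ring

variable {ι : Type*} [Fintype ι] (μ : ι → ℝ) (v : ι → ℝ≥0)

lemma memLp_eval_sub_sq_pi_gaussianReal (i : ι) :
    MemLp (fun y : ι → ℝ => (y i - μ i) ^ 2) 2 (Measure.pi fun i => gaussianReal (μ i) (v i)) :=
  (memLp_sub_sq_gaussianReal (μ i) (v i)).comp_measurePreserving (measurePreserving_eval _ i)

lemma memLp_sum_sub_sq_pi_gaussianReal :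
    MemLp (fun y : ι → ℝ => ∑ i, (y i - μ i) ^ 2) 2
      (Measure.pi fun i => gaussianReal (μ i) (v i)) :=
  memLp_finsetSum _ fun i _ => memLp_eval_sub_sq_pi_gaussianReal μ v i

lemma integral_sum_sub_sq_pi_gaussianReal :
    ∫ y, ∑ i, (y i - μ i) ^ 2 ∂(Measure.pi fun i => gaussianReal (μ i) (v i)) =
      ∑ i, (v i : ℝ) := by
  rw [integral_finsetSum _ fun i _ =>
    (memLp_eval_sub_sq_pi_gaussianReal μ v i).integrable one_le_two]
  refine Finset.sum_congr rfl fun i _ => ?_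
  exact (integral_comp_eval (μ := fun i => gaussianReal (μ i) (v i))
    (memLp_sub_sq_gaussianReal (μ i) (v i)).aestronglyMeasurable).trans
    (integral_sub_sq_gaussianReal (μ i) (v i))

lemma variance_sum_sub_sq_pi_gaussianReal :
    Var[fun y => ∑ i, (y i - μ i) ^ 2; Measure.pi fun i => gaussianReal (μ i) (v i)] =
      2 * ∑ i, (v i : ℝ) ^ 2 := by
  have hsum := variance_sum_pi fun i => memLp_sub_sq_gaussianReal (μ i) (v i)
  simp only [variance_sub_sq_gaussianReal, ← Finset.mul_sum] at hsum
  rw [← hsum]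
  congr with y
  simp

end GaussianMoments

section ProductDensity

lemma map_withDensity_comp {α β : Type*} [MeasurableSpace α] [MeasurableSpace β] (ν : Measure α)
    {g : α → β} (hg : Measurable g) {f : β → ℝ≥0∞} (hf : Measurable f) :
    (ν.withDensity (f ∘ g)).map g = (ν.map g).withDensity f := by
  ext s hs
  rw [Measure.map_apply hg hs, withDensity_apply _ (hg hs), withDensity_apply _ hs,
    setLIntegral_map hs hf hg]
  rfl

variable {ι : Type*} [Fintype ι] {E : ι → Type*} [∀ i, MeasurableSpace (E i)]

lemma pi_withDensity_ofReal (ν : ∀ i, Measure (E i)) [∀ i, SigmaFinite (ν i)]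
    {f : ∀ i, E i → ℝ} (hint : ∀ i, Integrable (f i) (ν i)) (hnonneg : ∀ i x, 0 ≤ f i x) :
    Measure.pi (fun i => (ν i).withDensity fun x => ENNReal.ofReal (f i x)) =
      (Measure.pi ν).withDensity fun x => ENNReal.ofReal (∏ i, f i (x i)) := by
  have (i : ι) : IsFiniteMeasure ((ν i).withDensity fun x => ENNReal.ofReal (f i x)) :=
    isFiniteMeasure_withDensity_ofReal (hint i).2
  refine Measure.pi_eq fun s hs => ?_
  have hbox : MeasurableSet (Set.univ.pi s) := .univ_pi hs
  have hprod_int : Integrable (fun x : ∀ i, E i => ∏ i, f i (x i)) (Measure.pi ν) :=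
    .fintype_prod_dep hint
  calc (Measure.pi ν).withDensity (fun x => ENNReal.ofReal (∏ i, f i (x i))) (Set.univ.pi s)
      = ENNReal.ofReal (∫ x in Set.univ.pi s, ∏ i, f i (x i) ∂Measure.pi ν) := by
        rw [withDensity_apply _ hbox, ofReal_integral_eq_lintegral_ofReal hprod_int.integrableOn
          (ae_of_all _ fun x => Finset.prod_nonneg fun i _ => hnonneg i (x i))]
    _ = ENNReal.ofReal (∏ i, ∫ x in s i, f i x ∂ν i) := by
        rw [Measure.restrict_pi_pi, integral_fintype_prod_eq_prod]
    _ = ∏ i, (ν i).withDensity (fun x => ENNReal.ofReal (f i x)) (s i) := by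
        rw [ENNReal.ofReal_prod_of_nonneg fun i _ => integral_nonneg (hnonneg i)]
        refine Finset.prod_congr rfl fun i _ => ?_
        rw [withDensity_apply _ (hs i), ofReal_integral_eq_lintegral_ofReal
          (hint i).integrableOn (ae_of_all _ (hnonneg i))]

end ProductDensity

section Density

variable {d : ℕ}

/-- The Lebesgue density of the Gaussian `N(μ, S)`, i.e. of the measure `mvGaussian d μ S`. -/
noncomputable def mvGaussianPDFReal (μ : Fin d → ℝ) (S : Matrix (Fin d) (Fin d) ℝ)
    (x : Fin d → ℝ) : ℝ :=
  1 / √((2 * π) ^ d * S.det) * rexp (-(1 / 2) * ((x - μ) ⬝ᵥ (S⁻¹ *ᵥ (x - μ))))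

lemma mvGaussian_eq_withDensity (μ : Fin d → ℝ) (S : Matrix (Fin d) (Fin d) ℝ) :
    mvGaussian d μ S = volume.withDensity fun x => ENNReal.ofReal (mvGaussianPDFReal μ S x) :=
  rfl

lemma measurable_mvGaussianPDFReal (μ : Fin d → ℝ) (S : Matrix (Fin d) (Fin d) ℝ) :
    Measurable (mvGaussianPDFReal μ S) := by
  unfold mvGaussianPDFReal dotProduct mulVec dotProduct
  fun_prop

lemma mulVec_dotProduct_inv_congr_mulVec {ι K : Type*} [Fintype ι] [DecidableEq ι] [Field K]
    {A : Matrix ι ι K} (hA : A.det ≠ 0) (S : Matrix ι ι K) (v : ι → K) :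
    (A *ᵥ v) ⬝ᵥ ((A * S * Aᵀ)⁻¹ *ᵥ (A *ᵥ v)) = v ⬝ᵥ (S⁻¹ *ᵥ v) := by
  have hA' : IsUnit A.det := hA.isUnit
  have hAT : IsUnit Aᵀ.det := by rwa [det_transpose]
  have hcancel : Aᵀ * (A * S * Aᵀ)⁻¹ * A = S⁻¹ := by
    rw [Matrix.mul_inv_rev, Matrix.mul_inv_rev, mul_nonsing_inv_cancel_left _ _ hAT,
      Matrix.mul_assoc, nonsing_inv_mul _ hA', Matrix.mul_one]
  rw [← hcancel, ← mulVec_mulVec, ← mulVec_mulVec, dotProduct_mulVec v, vecMul_transpose]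

lemma mvGaussianPDFReal_affine (b m : Fin d → ℝ) (S : Matrix (Fin d) (Fin d) ℝ)
    {A : Matrix (Fin d) (Fin d) ℝ} (hA : A.det ≠ 0) (x : Fin d → ℝ) :
    mvGaussianPDFReal m S x =
      |A.det| * mvGaussianPDFReal (b + A *ᵥ m) (A * S * Aᵀ) (b + A *ᵥ x) := by
  have hnorm : √((2 * π) ^ d * (A * S * Aᵀ).det) = |A.det| * √((2 * π) ^ d * S.det) := by
    rw [← Real.sqrt_sq_eq_abs, ← Real.sqrt_mul (sq_nonneg _), det_mul, det_mul, det_transpose]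
    congr 1
    ring
  have hdet : |A.det| ≠ 0 := abs_ne_zero.2 hA
  rw [mvGaussianPDFReal, mvGaussianPDFReal, add_sub_add_left_eq_sub, ← mulVec_sub,
    mulVec_dotProduct_inv_congr_mulVec hA, hnorm, ← mul_assoc, mul_one_div,
    mul_comm |A.det| (√_), div_mul_cancel_right₀ hdet]
  field_simp

lemma map_affine_volume_pi {ι : Type*} [Fintype ι] [DecidableEq ι] (b : ι → ℝ)
    {A : Matrix ι ι ℝ} (hA : A.det ≠ 0) :
    (volume : Measure (ι → ℝ)).map (fun x => b + A *ᵥ x) =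
      ENNReal.ofReal |A.det|⁻¹ • volume := by
  have hcomp : (fun x => b + A *ᵥ x) = (b + ·) ∘ toLin' A := rfl
  rw [hcomp, ← Measure.map_map (by fun_prop)
    (LinearMap.continuous_of_finiteDimensional _).measurable,
    Real.map_matrix_volume_pi_eq_smul_volume_pi hA, Measure.map_smul,
    map_add_left_eq_self, abs_inv]

lemma map_affine_mvGaussian (b m : Fin d → ℝ) (S : Matrix (Fin d) (Fin d) ℝ)
    {A : Matrix (Fin d) (Fin d) ℝ} (hA : A.det ≠ 0) :
    (mvGaussian d m S).map (fun x => b + A *ᵥ x) =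
      mvGaussian d (b + A *ᵥ m) (A * S * Aᵀ) := by
  set f : (Fin d → ℝ) → ℝ≥0∞ :=
    fun y => ENNReal.ofReal (mvGaussianPDFReal (b + A *ᵥ m) (A * S * Aᵀ) y)
  have hf : Measurable f := (measurable_mvGaussianPDFReal _ _).ennreal_ofReal
  have hscale : ENNReal.ofReal |A.det|⁻¹ * ENNReal.ofReal |A.det| = 1 := by
    rw [← ENNReal.ofReal_mul (by positivity), inv_mul_cancel₀ (abs_ne_zero.2 hA),
      ENNReal.ofReal_one]
  have hpull : (fun x => ENNReal.ofReal (mvGaussianPDFReal m S x)) =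
      (ENNReal.ofReal |A.det| • f) ∘ fun x => b + A *ᵥ x := by
    funext x
    rw [mvGaussianPDFReal_affine b m S hA, ENNReal.ofReal_mul (abs_nonneg _)]
    rfl
  calc (mvGaussian d m S).map (fun x => b + A *ᵥ x)
      = (volume.map fun x => b + A *ᵥ x).withDensity (ENNReal.ofReal |A.det| • f) := by
        rw [mvGaussian_eq_withDensity, hpull,
          map_withDensity_comp _ (by fun_prop) (hf.const_smul _)]
    _ = (ENNReal.ofReal |A.det|⁻¹ * ENNReal.ofReal |A.det|) • volume.withDensity f := by
        rw [map_affine_volume_pi b hA, withDensity_smul_measure, withDensity_smul _ hf, smul_smul]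
    _ = mvGaussian d (b + A *ᵥ m) (A * S * Aᵀ) := by
        rw [hscale, one_smul, mvGaussian_eq_withDensity]

lemma mvGaussianPDFReal_diagonal (m : Fin d → ℝ) {v : Fin d → ℝ≥0} (hv : ∀ i, v i ≠ 0)
    (x : Fin d → ℝ) :
    mvGaussianPDFReal m (diagonal fun i => (v i : ℝ)) x =
      ∏ i, gaussianPDFReal (m i) (v i) (x i) := by
  have hv' (i : Fin d) : (v i : ℝ) ≠ 0 := by exact_mod_cast hv i
  have hinv : (diagonal fun i => (v i : ℝ))⁻¹ = diagonal fun i => (v i : ℝ)⁻¹ := by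
    refine inv_eq_right_inv ?_
    simp [diagonal_mul_diagonal, hv]
  have hnorm : √((2 * π) ^ d * ∏ i, (v i : ℝ)) = ∏ i, √(2 * π * v i) := by
    rw [← Real.sqrt_prod _ fun i _ => by positivity, Finset.prod_mul_distrib]
    simp
  simp only [mvGaussianPDFReal, gaussianPDFReal]
  rw [hinv, det_diagonal, hnorm, Finset.prod_mul_distrib, Finset.prod_inv_distrib, one_div,
    ← Real.exp_sum]
  congr 2
  simp only [dotProduct, mulVec_diagonal, Finset.mul_sum, Pi.sub_apply]
  refine Finset.sum_congr rfl fun i _ => ?_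
  field_simp [hv' i]

lemma mvGaussian_diagonal (m : Fin d → ℝ) {v : Fin d → ℝ≥0} (hv : ∀ i, v i ≠ 0) :
    mvGaussian d m (diagonal fun i => (v i : ℝ)) =
      Measure.pi fun i => gaussianReal (m i) (v i) := by
  simp only [mvGaussian_eq_withDensity, mvGaussianPDFReal_diagonal m hv]
  simp only [fun i => gaussianReal_of_var_ne_zero (m i) (hv i), gaussianPDF_def]
  exact (pi_withDensity_ofReal _ (fun i => integrable_gaussianPDFReal (m i) (v i))
    fun i => gaussianPDFReal_nonneg (m i) (v i)).symm

end Density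

section Diagonalization

lemma trace_pow_eq_sum_eigenvalues_pow {ι 𝕜 : Type*} [Fintype ι] [DecidableEq ι] [RCLike 𝕜]
    {A : Matrix ι ι 𝕜} (hA : A.IsHermitian) (n : ℕ) :
    (A ^ n).trace = ∑ i, (hA.eigenvalues i : 𝕜) ^ n := by
  conv_lhs => rw [hA.spectral_theorem, ← map_pow, Unitary.conjStarAlgAut_apply, trace_mul_cycle,
    Unitary.coe_star_mul_self, one_mul, diagonal_pow, trace_diagonal]
  rfl

lemma sum_mulVec_sq_of_transpose_mul_self {m n R : Type*} [Fintype m] [Fintype n] [DecidableEq n]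
    [CommSemiring R] {U : Matrix m n R} (hU : Uᵀ * U = 1) (y : n → R) :
    ∑ i, (U *ᵥ y) i ^ 2 = ∑ i, y i ^ 2 := by
  have h : (U *ᵥ y) ⬝ᵥ (U *ᵥ y) = y ⬝ᵥ y := by
    rw [dotProduct_mulVec, ← mulVec_transpose, mulVec_mulVec, hU, one_mulVec]
  simpa only [dotProduct, ← sq] using h

variable {d : ℕ} {S : Matrix (Fin d) (Fin d) ℝ}

lemma frobNorm_nonneg (S : Matrix (Fin d) (Fin d) ℝ) : 0 ≤ frobNorm S :=
  Real.sqrt_nonneg _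

lemma frobNorm_sq_eq_sum_eigenvalues_sq (hS : S.IsHermitian) :
    frobNorm S ^ 2 = ∑ i, hS.eigenvalues i ^ 2 := by
  have htrace : (S ^ 2).trace = ∑ i, ∑ j, S i j ^ 2 := by
    simp only [sq, trace, diag_apply, mul_apply]
    refine Finset.sum_congr rfl fun i _ => Finset.sum_congr rfl fun j _ => ?_
    rw [← hS.apply i j, star_trivial]
  rw [frobNorm, Real.sq_sqrt (by positivity), ← htrace, trace_pow_eq_sum_eigenvalues_pow hS]
  rfl

lemma mvGaussian_eq_map_pi_gaussianReal (μ : Fin d → ℝ) (hS : S.PosDef) :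
    mvGaussian d μ S = (Measure.pi fun i => gaussianReal 0 (hS.1.eigenvalues i).toNNReal).map
      fun y => μ + (hS.1.eigenvectorUnitary : Matrix (Fin d) (Fin d) ℝ) *ᵥ y := by
  set U := (hS.1.eigenvectorUnitary : Matrix (Fin d) (Fin d) ℝ)
  have hU : U.det ≠ 0 := (UnitaryGroup.det_isUnit hS.1.eigenvectorUnitary).ne_zero
  have hspec : U * diagonal (fun i => ((hS.1.eigenvalues i).toNNReal : ℝ)) * Uᵀ = S := by
    simp only [Real.coe_toNNReal _ (hS.eigenvalues_pos _).le]
    exact hS.1.spectral_theorem.symm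
  have hdiag := mvGaussian_diagonal (0 : Fin d → ℝ) fun i =>
    (Real.toNNReal_pos.2 (hS.eigenvalues_pos i)).ne'
  simp only [Pi.zero_apply] at hdiag
  rw [← hdiag, map_affine_mvGaussian _ _ _ hU, mulVec_zero, add_zero, hspec]

lemma isProbabilityMeasure_mvGaussian (μ : Fin d → ℝ) (hS : S.PosDef) :
    IsProbabilityMeasure (mvGaussian d μ S) := by
  rw [mvGaussian_eq_map_pi_gaussianReal μ hS]
  exact Measure.isProbabilityMeasure_map (by fun_prop)

lemma identDistrib_sum_sub_sq_mvGaussian (μ : Fin d → ℝ) (hS : S.PosDef) :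
    IdentDistrib (fun x : Fin d → ℝ => ∑ i, (x i - μ i) ^ 2) (fun y => ∑ i, (y i - 0) ^ 2)
      (mvGaussian d μ S)
      (Measure.pi fun i => gaussianReal 0 (hS.1.eigenvalues i).toNNReal) where
  aemeasurable_fst := Measurable.aemeasurable (by fun_prop)
  aemeasurable_snd := Measurable.aemeasurable (by fun_prop)
  map_eq := by
    rw [mvGaussian_eq_map_pi_gaussianReal μ hS, Measure.map_map (by fun_prop) (by fun_prop)]
    congr 1
    funext y
    simpa using sum_mulVec_sq_of_transpose_mul_self
      ((mem_orthogonalGroup_iff' _ _).1 hS.1.eigenvectorUnitary.2) y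

lemma memLp_sum_sub_sq_mvGaussian (μ : Fin d → ℝ) (hS : S.PosDef) :
    MemLp (fun x : Fin d → ℝ => ∑ i, (x i - μ i) ^ 2) 2 (mvGaussian d μ S) :=
  (identDistrib_sum_sub_sq_mvGaussian μ hS).memLp_iff.2 (memLp_sum_sub_sq_pi_gaussianReal _ _)

lemma integral_sum_sub_sq_mvGaussian (μ : Fin d → ℝ) (hS : S.PosDef) :
    ∫ x, ∑ i, (x i - μ i) ^ 2 ∂mvGaussian d μ S = S.trace := by
  rw [(identDistrib_sum_sub_sq_mvGaussian μ hS).integral_eq, integral_sum_sub_sq_pi_gaussianReal,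
    hS.1.trace_eq_sum_eigenvalues]
  simp only [Real.coe_toNNReal _ (hS.eigenvalues_pos _).le]
  rfl

lemma variance_sum_sub_sq_mvGaussian (μ : Fin d → ℝ) (hS : S.PosDef) :
    Var[fun x => ∑ i, (x i - μ i) ^ 2; mvGaussian d μ S] = 2 * frobNorm S ^ 2 := by
  rw [(identDistrib_sum_sub_sq_mvGaussian μ hS).variance_eq, variance_sum_sub_sq_pi_gaussianReal,
    frobNorm_sq_eq_sum_eigenvalues_sq hS.1]
  simp only [Real.coe_toNNReal _ (hS.eigenvalues_pos _).le]

end Diagonalization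

lemma abs_sq_sub_trace_le_of_median_radius {d : ℕ} (μ : Fin d → ℝ)
    {S : Matrix (Fin d) (Fin d) ℝ} (hS : S.PosDef) {R : ℝ} (hR : 0 ≤ R)
    (hmed : mvGaussian d μ S {x | √(∑ i, (x i - μ i) ^ 2) ≤ R} = ENNReal.ofReal (1 / 2)) :
    |R ^ 2 - S.trace| ≤ √2 * frobNorm S := by
  have := isProbabilityMeasure_mvGaussian μ hS
  set ball : Set (Fin d → ℝ) := {x | ∑ i, (x i - μ i) ^ 2 ≤ R ^ 2}
  have hball : (mvGaussian d μ S).real ball = 1 / 2 := by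
    simp only [Real.sqrt_le_left hR] at hmed
    rw [measureReal_def, hmed, ENNReal.toReal_ofReal (by norm_num)]
  have hballc : (mvGaussian d μ S).real ballᶜ = 1 / 2 := by
    rw [probReal_compl_eq_one_sub (measurableSet_le (by fun_prop) measurable_const), hball]
    norm_num
  have houter : 1 / 2 ≤ (mvGaussian d μ S).real {x | R ^ 2 ≤ ∑ i, (x i - μ i) ^ 2} :=
    hballc.ge.trans (measureReal_mono fun x (hx : ¬ ∑ i, (x i - μ i) ^ 2 ≤ R ^ 2) =>
      (not_le.1 hx).le)
  have h := abs_sub_integral_le_sqrt_variance (memLp_sum_sub_sq_mvGaussian μ hS) hball.ge houter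
  rwa [integral_sum_sub_sq_mvGaussian μ hS, variance_sum_sub_sq_mvGaussian μ hS,
    Real.sqrt_mul zero_le_two, Real.sqrt_sq (frobNorm_nonneg S)] at h

lemma one_half_lt_log_mul_div {n k : ℕ} (hn : 1 ≤ n) (hk : 1 ≤ k) {β : ℝ} (hβ0 : 0 < β)
    (hβ1 : β < 1 / 2) : 1 / 2 < Real.log (n * k / β) := by
  have hnk : (1 : ℝ) ≤ n * k := by exact_mod_cast Nat.mul_pos hn hk
  have hratio : 2 ≤ n * k / β := by
    rw [le_div_iff₀ hβ0]
    linarith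
  calc (1 : ℝ) / 2 < Real.log 2 := by linarith [Real.log_two_gt_d9]
    _ ≤ Real.log (n * k / β) := Real.log_le_log two_pos hratio

theorem median_radius_bounds_general {d : ℕ} (μ : Fin d → ℝ)
    (S : Matrix (Fin d) (Fin d) ℝ) (hS : S.PosDef) {L : ℝ} (hL : 1 / 2 < L)
    (hF : frobNorm S * √L ≤ (1 / 8) * S.trace) (R : ℝ) (hR : 0 < R)
    (hmed : mvGaussian d μ S {x | √(∑ i, (x i - μ i) ^ 2) ≤ R} = ENNReal.ofReal (1 / 2)) :
    √((3 / 4) * S.trace) < R ∧ R < √((3 / 2) * S.trace) := by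
  have hmedian := abs_sq_sub_trace_le_of_median_radius μ hS hR.le hmed
  have hspread : √2 * frobNorm S < S.trace / 4 := by
    rcases (frobNorm_nonneg S).eq_or_lt with hzero | hpos
    · rw [← hzero, mul_zero] at hmedian ⊢
      nlinarith [abs_le.1 hmedian]
    · have hsqrt : √2 < 2 * √L := by
        rw [Real.sqrt_lt' (by positivity), mul_pow, Real.sq_sqrt (by linarith)]
        linarith
      calc √2 * frobNorm S < 2 * √L * frobNorm S := mul_lt_mul_of_pos_right hsqrt hpos
        _ ≤ S.trace / 4 := by linarith
  obtain ⟨hlower, hupper⟩ := abs_lt.1 (hmedian.trans_lt hspread)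
  exact ⟨(Real.sqrt_lt' hR).2 (by linarith), Real.lt_sqrt_of_sq_lt (by linarith)⟩

theorem median_radius_bounds {d : ℕ} (μ : Fin d → ℝ)
    (S : Matrix (Fin d) (Fin d) ℝ) (hS : S.PosDef) (n k : ℕ) (hn : 1 ≤ n) (hk : 1 ≤ k)
    (β : ℝ) (hβ0 : 0 < β) (hβ1 : β < 1 / 2)
    (hF : frobNorm S * Real.sqrt (Real.log (n * k / β)) ≤ (1 / 8) * S.trace)
    (h2 : specNorm S * (Real.log (n * k / β)) ^ 2 ≤ (1 / 8) * S.trace)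
    (R : ℝ) (hR : 0 < R)
    (hmed : mvGaussian d μ S {x | Real.sqrt (∑ i, (x i - μ i) ^ 2) ≤ R} =
      ENNReal.ofReal (1 / 2)) :
    Real.sqrt ((3 / 4) * S.trace) < R ∧ R < Real.sqrt ((3 / 2) * S.trace) :=
  median_radius_bounds_general μ S hS (one_half_lt_log_mul_div hn hk hβ0 hβ1) hF R hR hmed
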